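/- arXiv:0905.0254 — 2 statements merged into one kernel-verified Lean document; each statement's English description precedes it below -/
import Mathlib

section
/- For every supermartingale S : X^* → ℝ̄ and every situation s ∈ X^*, S(s) ≥ inf_{ω ∈ Γ(s)} limsup_{n→∞} S(ω^n). -/
open Filter Topology

namespace GTP

noncomputable section

/-- An *outer probability content* on a type `Y`: a functional on all
`EReal`-valued functions that is monotone, positively homogeneous,
subadditive, and maps real constants to themselves. -/
def IsOPC {Y : Type*} (E : (Y → EReal) → EReal) : Prop :=
  (∀ f g : Y → EReal, (∀ y, f y ≤ g y) → E f ≤ E g) ∧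
  (∀ (c : ℝ), 0 < c → ∀ f : Y → EReal,
    E (fun y => (c : EReal) * f y) = (c : EReal) * E f) ∧
  (∀ f g : Y → EReal, E (fun y => f y + g y) ≤ E f + E g) ∧
  (∀ c : ℝ, E (fun _ => (c : EReal)) = (c : EReal))

/-- The sum `Σ_{k=0}^∞ f k` of a series of extended reals,
as the supremum of its partial sums (the right notion for nonnegative terms). -/
def eseries (f : ℕ → EReal) : EReal := ⨆ n, ∑ k ∈ Finset.range n, f k

/-- A *superexpectation*: an outer probability content that is moreover
countably subadditive on nonnegative functions. -/
def IsSuperexpectation {Y : Type*} (E : (Y → EReal) → EReal) : Prop :=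
  IsOPC E ∧
  ∀ f : ℕ → Y → EReal, (∀ k y, 0 ≤ f k y) →
    E (fun y => eseries fun k => f k y) ≤ eseries fun k => E (f k)

variable {X : Type*}

/-- The length-`n` prefix `ω^n` of a sequence `ω ∈ Ω = X^∞`. -/
def pre (ω : ℕ → X) (n : ℕ) : List X := List.ofFn fun i : Fin n => ω i

/-- `Γ(s)`: the set of infinite extensions of the situation `s`. -/
def Gamma (s : List X) : Set (ℕ → X) := {ω | pre ω s.length = s}

/-- A *supermartingale* with respect to the outer probability contents
`E 0, E 1, …` (`E n` governs the trial played in situations of length `n`,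
i.e. `E n` is the paper's `E_{n+1}`). -/
def IsSupermartingale (E : ℕ → (X → EReal) → EReal) (S : List X → EReal) : Prop :=
  ∀ s : List X, E s.length (fun x => S (s ++ [x])) ≤ S s

/-- A *martingale*: equality holds at every situation. -/
def IsMartingale (E : ℕ → (X → EReal) → EReal) (S : List X → EReal) : Prop :=
  ∀ s : List X, E s.length (fun x => S (s ++ [x])) = S s

/-- A function to `EReal` bounded below by a real constant. -/
def BddBelowFn {Y : Type*} (S : Y → EReal) : Prop := ∃ c : ℝ, ∀ t, (c : EReal) ≤ S t

/-- The conditional upper expectation `Ē(ξ | s)`. -/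
def upExp (E : ℕ → (X → EReal) → EReal) (ξ : (ℕ → X) → EReal) (s : List X) : EReal :=
  sInf {a | ∃ S : List X → EReal, IsSupermartingale E S ∧ BddBelowFn S ∧
    (∀ ω ∈ Gamma s, ξ ω ≤ liminf (fun n => S (pre ω n)) atTop) ∧ S s = a}

/-- The conditional lower expectation `E̲(ξ | s) = −Ē(−ξ | s)`. -/
def lowExp (E : ℕ → (X → EReal) → EReal) (ξ : (ℕ → X) → EReal) (s : List X) : EReal :=
  - upExp E (fun ω => - ξ ω) s

/-- The indicator function of an event, with values in `EReal`. -/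
def ind (A : Set (ℕ → X)) : (ℕ → X) → EReal := A.indicator fun _ => 1

/-- The conditional upper probability `P̄(A | s)`. -/
def upProb (E : ℕ → (X → EReal) → EReal) (A : Set (ℕ → X)) (s : List X) : EReal :=
  upExp E (ind A) s

/-- The conditional lower probability `P̲(A | s)`. -/
def lowProb (E : ℕ → (X → EReal) → EReal) (A : Set (ℕ → X)) (s : List X) : EReal :=
  lowExp E (ind A) s


theorem pre_succ_aux (ω : ℕ → X) (n : ℕ) : pre ω (n + 1) = pre ω n ++ [ω n] := by
  unfold pre
  rw [List.ofFn_succ_last]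
  simp

/-- For every supermartingale `S` and every situation `s`,
`S(s) ≥ inf_{ω ∈ Γ(s)} limsup_{n→∞} S(ω^n)`. -/
theorem supermartingale_ge_iInf_limsup [Nonempty X]
    (E : ℕ → (X → EReal) → EReal) (hE : ∀ n, IsOPC (E n))
    (S : List X → EReal) (hS : IsSupermartingale E S) (s : List X) :
    ⨅ ω ∈ Gamma s, limsup (fun n => S (pre ω n)) atTop ≤ S s := by
  by_contra! hlt
  obtain ⟨c, h1, h2⟩ := EReal.lt_iff_exists_real_btwn.1 hlt
  have step : ∀ t : List X, ∃ x : X, S t < c → S (t ++ [x]) < c := by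
    intro t
    by_contra! h
    have ht : S t < c := (h (Classical.arbitrary X)).1
    have hm := (hE t.length).1 (fun _ => (c : EReal)) (fun x => S (t ++ [x])) (fun x => (h x).2)
    rw [(hE t.length).2.2.2 c] at hm
    exact absurd ((hm.trans (hS t)).trans_lt ht) (lt_irrefl _)
  choose f hf using step
  let g : ℕ → List X := fun n => Nat.rec s (fun _ t => t ++ [f t]) n
  have g0 : g 0 = s := rfl
  have gs : ∀ n, g (n + 1) = g n ++ [f (g n)] := fun _ => rfl
  have gc : ∀ n, S (g n) < c := by
    intro n
    induction n with
    | zero => exact h1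
    | succ k ih => rw [gs]; exact hf _ ih
  let ω : ℕ → X := fun i => if h : i < s.length then s[i] else f (g (i - s.length))
  have p0 : pre ω s.length = s := by
    unfold pre
    apply List.ext_getElem
    · simp
    · intro i hi hi2
      simp [ω, hi2]
  have pn : ∀ n, pre ω (s.length + n) = g n := by
    intro n
    induction n with
    | zero => exact p0
    | succ k ih =>
      rw [← Nat.add_assoc, pre_succ_aux, ih, gs]
      simp [ω]
  have hle : limsup (fun n => S (pre ω n)) atTop ≤ c := by
    apply Filter.limsup_le_of_le (by isBoundedDefault)
    filter_upwards [eventually_ge_atTop s.length] with n hn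
    obtain ⟨k, rfl⟩ := Nat.exists_eq_add_of_le hn
    rw [pn]
    exact (gc k).le
  have : (⨅ ω ∈ Gamma s, limsup (fun n => S (pre ω n)) atTop) ≤ c :=
    (iInf₂_le ω p0).trans hle
  exact absurd (h2.trans_le this) (lt_irrefl _)

end

end GTP
end

section
/- For every function ξ : Ω → ℝ̄ and every situation s, Ē(ξ|s) = inf{ S(s) : S a bounded-below supermartingale with liminf_{n→∞} S(ω^n) ≥ ξ(ω) for all ω ∈ Ω }; that is, the infimum defining the conditional upper expectation is unchanged when the requirement 'for all ω ∈ Γ(s)' is strengthened to 'for all ω ∈ Ω'. -/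
open Filter Topology

namespace GTP

noncomputable section

variable {X : Type*}

/-- The infimum defining `Ē(ξ|s)` is unchanged when the requirement
`∀ ω ∈ Γ(s)` is strengthened to `∀ ω ∈ Ω`. -/
theorem upExp_eq_inf_over_all [Nonempty X]
    (E : ℕ → (X → EReal) → EReal) (hE : ∀ n, IsOPC (E n))
    (ξ : (ℕ → X) → EReal) (s : List X) :
    upExp E ξ s =
      sInf {a | ∃ S : List X → EReal, IsSupermartingale E S ∧ BddBelowFn S ∧
        (∀ ω : ℕ → X, ξ ω ≤ liminf (fun n => S (pre ω n)) atTop) ∧ S s = a} := by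
  classical
  apply le_antisymm
  · apply sInf_le_sInf
    rintro a ⟨S, h1, h2, h3, h4⟩
    exact ⟨S, h1, h2, fun ω _ => h3 ω, h4⟩
  · apply sInf_le_sInf
    rintro a ⟨S, h1, ⟨c, h2⟩, h3, h4⟩
    refine ⟨fun t => if s <+: t then S t else ⊤, ?_, ⟨c, ?_⟩, ?_, ?_⟩
    · intro t
      by_cases ht : s <+: t
      · have h : ∀ x, s <+: t ++ [x] := fun x => ht.trans (List.prefix_append _ _)
        simpa only [h, ht, if_true] using h1 t
      · simp only [ht, if_false]
        exact le_top
    · intro t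
      dsimp only
      split_ifs
      · exact h2 t
      · exact le_top
    · intro ω
      have key : ∀ n, s.length ≤ n → (s <+: pre ω n ↔ ω ∈ Gamma s) := by
        intro n hn
        have e : (pre ω n).take s.length = pre ω s.length := by
          apply List.ext_getElem
          · simp [pre, hn]
          · intro i _ _
            simp [pre]
        rw [List.prefix_iff_eq_take, e]
        exact eq_comm
      by_cases hω : ω ∈ Gamma s
      · refine (h3 ω hω).trans (le_of_eq (liminf_congr ?_))
        filter_upwards [eventually_ge_atTop s.length] with n hn
        rw [if_pos ((key n hn).2 hω)]
      · have : liminf (fun n => if s <+: pre ω n then S (pre ω n) else ⊤) atTop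
            = liminf (fun _ : ℕ => (⊤ : EReal)) atTop := by
          apply liminf_congr
          filter_upwards [eventually_ge_atTop s.length] with n hn
          rw [if_neg (fun h => hω ((key n hn).1 h))]
        rw [this, liminf_const]
        exact le_top
    · simpa using h4

end

end GTP
end
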